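/- arXiv:0903.1208 — 9 statements merged into one kernel-verified Lean document; each statement's English description precedes it below -/
import Mathlib

section
/- For all positive real numbers x and y with x ≠ y, and for every fixed real number s, the function r ↦ G(r,s;x,y) is (strictly) increasing on (-∞,∞). -/
/-!
Put `f t = log (x ^ t + y ^ t)`. Then `gini r s x y = exp (dslope f s r)`: off the diagonal the
exponent is the slope of `f` between `s` and `r`, and on the diagonal it is `f' s`. When `x ≠ y` the
derivative of `f`, a weighted average of `log x` and `log y` whose weight moves towards the larger
one, is strictly increasing, so `f` is strictly convex and its slopes from `s` are strictly
increasing, with `f' s` separating those to the left of `s` from those to the right.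
-/

/-- Gini mean `G(r,s;x,y)`. -/
noncomputable def gini (r s x y : ℝ) : ℝ :=
  if r = s then
    Real.exp ((x ^ r * Real.log x + y ^ r * Real.log y) / (x ^ r + y ^ r))
  else
    ((x ^ s + y ^ s) / (x ^ r + y ^ r)) ^ (1 / (s - r))

theorem hasDerivAt_log_rpow_add_rpow {x y : ℝ} (hx : 0 < x) (hy : 0 < y) (t : ℝ) :
    HasDerivAt (fun t : ℝ => Real.log (x ^ t + y ^ t))
      ((x ^ t * Real.log x + y ^ t * Real.log y) / (x ^ t + y ^ t)) t :=
  ((Real.hasStrictDerivAt_const_rpow hx t).hasDerivAt.add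
    (Real.hasStrictDerivAt_const_rpow hy t).hasDerivAt).log
    (add_pos (Real.rpow_pos_of_pos hx t) (Real.rpow_pos_of_pos hy t)).ne'

theorem strictMono_logDeriv_rpow_add_rpow {x y : ℝ} (hx : 0 < x) (hy : 0 < y) (hxy : x ≠ y) :
    StrictMono (fun t : ℝ => (x ^ t * Real.log x + y ^ t * Real.log y) / (x ^ t + y ^ t)) := by
  intro a b hab
  have hXa := Real.rpow_pos_of_pos hx a
  have hYa := Real.rpow_pos_of_pos hy a
  have hXb := Real.rpow_pos_of_pos hx b
  have hYb := Real.rpow_pos_of_pos hy b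
  have hd : 0 < b - a := sub_pos.2 hab
  have hX : x ^ b = x ^ a * x ^ (b - a) := by rw [← Real.rpow_add hx]; ring_nf
  have hY : y ^ b = y ^ a * y ^ (b - a) := by rw [← Real.rpow_add hy]; ring_nf
  have key : 0 < (x ^ (b - a) - y ^ (b - a)) * (Real.log x - Real.log y) := by
    rcases hxy.lt_or_gt with h | h
    · exact mul_pos_of_neg_of_neg (sub_neg.2 (Real.rpow_lt_rpow hx.le h hd))
        (sub_neg.2 (Real.log_lt_log hx h))
    · exact mul_pos (sub_pos.2 (Real.rpow_lt_rpow hy.le h hd))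
        (sub_pos.2 (Real.log_lt_log hy h))
  -- After cross-multiplication, the difference of the two sides of the goal is this product.
  have key' := mul_pos (mul_pos hXa hYa) key
  change _ / _ < _ / _
  rw [div_lt_div_iff₀ (add_pos hXa hYa) (add_pos hXb hYb), hX, hY]
  linarith

theorem strictConvexOn_log_rpow_add_rpow {x y : ℝ} (hx : 0 < x) (hy : 0 < y) (hxy : x ≠ y) :
    StrictConvexOn ℝ Set.univ (fun t : ℝ => Real.log (x ^ t + y ^ t)) := by
  have hd := hasDerivAt_log_rpow_add_rpow hx hy
  refine StrictMono.strictConvexOn_univ_of_deriv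
    (continuous_iff_continuousAt.2 fun t => (hd t).continuousAt) ?_
  rw [funext fun t => (hd t).deriv]
  exact strictMono_logDeriv_rpow_add_rpow hx hy hxy

/-- For a strictly convex function on the line, the slope from a fixed base point, extended to that
point by the derivative, is strictly increasing. -/
theorem StrictConvexOn.strictMono_dslope {f : ℝ → ℝ} (hf : StrictConvexOn ℝ Set.univ f) {s : ℝ}
    (hs : DifferentiableAt ℝ f s) : StrictMono (dslope f s) := by
  intro a b hab
  by_cases ha : a = s
  · subst ha
    rw [dslope_same, dslope_of_ne _ hab.ne']
    exact hf.lt_slope_of_hasDerivAt (Set.mem_univ _) (Set.mem_univ _) hab hs.hasDerivAt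
  by_cases hb : b = s
  · subst hb
    rw [dslope_same, dslope_of_ne _ hab.ne, slope_comm]
    exact hf.slope_lt_of_hasDerivAt (Set.mem_univ _) (Set.mem_univ _) hab hs.hasDerivAt
  rw [dslope_of_ne _ ha, dslope_of_ne _ hb, slope_def_field, slope_def_field]
  exact hf.secant_strict_mono (Set.mem_univ _) (Set.mem_univ _) (Set.mem_univ _) ha hb hab

theorem gini_eq_exp_dslope {x y : ℝ} (hx : 0 < x) (hy : 0 < y) (r s : ℝ) :
    gini r s x y = Real.exp (dslope (fun t : ℝ => Real.log (x ^ t + y ^ t)) s r) := by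
  by_cases h : r = s
  · subst h
    rw [dslope_same, (hasDerivAt_log_rpow_add_rpow hx hy r).deriv, gini, if_pos rfl]
  · have hr := add_pos (Real.rpow_pos_of_pos hx r) (Real.rpow_pos_of_pos hy r)
    have hs := add_pos (Real.rpow_pos_of_pos hx s) (Real.rpow_pos_of_pos hy s)
    rw [dslope_of_ne _ h, slope_comm, slope_def_field, gini, if_neg h,
      Real.rpow_def_of_pos (div_pos hs hr), Real.log_div hs.ne' hr.ne', mul_one_div]

theorem gini_strictMono_left (x y : ℝ) (hx : 0 < x) (hy : 0 < y) (hxy : x ≠ y) (s : ℝ) :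
    StrictMono (fun r : ℝ => gini r s x y) := by
  simp only [gini_eq_exp_dslope hx hy]
  exact Real.exp_strictMono.comp ((strictConvexOn_log_rpow_add_rpow hx hy hxy).strictMono_dslope
    (hasDerivAt_log_rpow_add_rpow hx hy s).differentiableAt)
end

section
/- For all positive real numbers x and y with x ≠ y, and for every fixed real number r, the function s ↦ G(r,s;x,y) is (strictly) increasing on (-∞,∞). -/
/-- The logarithm of the power sum `x ^ t + y ^ t`, as a function of the exponent. -/
noncomputable def logPowSum (x y t : ℝ) : ℝ := Real.log (x ^ t + y ^ t)

/-- The average of `log x` and `log y` with weights proportional to `x ^ t` and `y ^ t`. -/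
noncomputable def weightedLog (x y t : ℝ) : ℝ :=
  (x ^ t * Real.log x + y ^ t * Real.log y) / (x ^ t + y ^ t)

lemma hasDerivAt_logPowSum {x y : ℝ} (hx : 0 < x) (hy : 0 < y) (t : ℝ) :
    HasDerivAt (logPowSum x y) (weightedLog x y t) t := by
  have h := (Real.hasStrictDerivAt_const_rpow hx t).hasDerivAt.add
    (Real.hasStrictDerivAt_const_rpow hy t).hasDerivAt
  have hpos : 0 < x ^ t + y ^ t := by positivity
  exact h.log (ne_of_gt hpos)

/-- After clearing denominators, the increment from `s` to `t` is
`x ^ s * y ^ s * (x ^ (t - s) - y ^ (t - s)) * (log x - log y)`, whose last two factors have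
the same sign. -/
lemma strictMono_weightedLog {x y : ℝ} (hx : 0 < x) (hy : 0 < y) (hxy : x ≠ y) :
    StrictMono (weightedLog x y) := by
  intro s t hst
  have hd : 0 < t - s := sub_pos.2 hst
  have key : 0 < (x ^ (t - s) - y ^ (t - s)) * (Real.log x - Real.log y) := by
    rcases lt_or_gt_of_ne hxy with h | h
    · exact mul_pos_of_neg_of_neg (sub_neg.2 (Real.rpow_lt_rpow hx.le h hd))
        (sub_neg.2 (Real.log_lt_log hx h))
    · exact mul_pos (sub_pos.2 (Real.rpow_lt_rpow hy.le h hd))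
        (sub_pos.2 (Real.log_lt_log hy h))
  have hxt : x ^ t = x ^ s * x ^ (t - s) := by
    rw [← Real.rpow_add hx, add_sub_cancel]
  have hyt : y ^ t = y ^ s * y ^ (t - s) := by
    rw [← Real.rpow_add hy, add_sub_cancel]
  have hpos : 0 < (x ^ s * y ^ s) *
      ((x ^ (t - s) - y ^ (t - s)) * (Real.log x - Real.log y)) := by positivity
  unfold weightedLog
  rw [div_lt_div_iff₀ (by positivity) (by positivity), hxt, hyt]
  linear_combination hpos

lemma strictConvexOn_logPowSum {x y : ℝ} (hx : 0 < x) (hy : 0 < y) (hxy : x ≠ y) :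
    StrictConvexOn ℝ Set.univ (logPowSum x y) := by
  have hderiv : deriv (logPowSum x y) = weightedLog x y :=
    funext fun t => (hasDerivAt_logPowSum hx hy t).deriv
  refine StrictMono.strictConvexOn_univ_of_deriv ?_ ?_
  · exact continuous_iff_continuousAt.2 fun t => (hasDerivAt_logPowSum hx hy t).continuousAt
  · rw [hderiv]
    exact strictMono_weightedLog hx hy hxy

lemma gini_eq_exp_of_ne {x y r s : ℝ} (hx : 0 < x) (hy : 0 < y) (hsr : s ≠ r) :
    gini r s x y = Real.exp ((logPowSum x y s - logPowSum x y r) / (s - r)) := by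
  have hs : 0 < x ^ s + y ^ s := by positivity
  have hr : 0 < x ^ r + y ^ r := by positivity
  rw [gini, if_neg hsr.symm, Real.rpow_def_of_pos (div_pos hs hr),
    Real.log_div hs.ne' hr.ne', mul_one_div, logPowSum, logPowSum]

lemma gini_self (r x y : ℝ) : gini r r x y = Real.exp (weightedLog x y r) := by
  rw [gini, if_pos rfl, weightedLog]

theorem gini_strictMono_right (x y : ℝ) (hx : 0 < x) (hy : 0 < y) (hxy : x ≠ y) (r : ℝ) :
    StrictMono (fun s : ℝ => gini r s x y) := by
  intro s t hst
  have hconv := strictConvexOn_logPowSum hx hy hxy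
  have hder := hasDerivAt_logPowSum hx hy r
  change gini r s x y < gini r t x y
  by_cases hs : s = r
  · subst hs
    rw [gini_self, gini_eq_exp_of_ne hx hy hst.ne', Real.exp_lt_exp, ← slope_def_field]
    exact hconv.lt_slope_of_hasDerivAt (Set.mem_univ _) (Set.mem_univ _) hst hder
  by_cases ht : t = r
  · subst ht
    rw [gini_self, gini_eq_exp_of_ne hx hy hs, Real.exp_lt_exp, ← slope_def_field, slope_comm]
    exact hconv.slope_lt_of_hasDerivAt (Set.mem_univ _) (Set.mem_univ _) hst hder
  rw [gini_eq_exp_of_ne hx hy hs, gini_eq_exp_of_ne hx hy ht, Real.exp_lt_exp]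
  exact hconv.secant_strict_mono (Set.mem_univ _) (Set.mem_univ _) (Set.mem_univ _) hs ht hst
end

section
/- For all positive real numbers x and y, the function (r,s) ↦ ln G(r,s;x,y) is convex on the region (-∞,0) × (-∞,0); that is, G(r,s;x,y) is logarithmically convex with respect to (r,s) on (-∞,0) × (-∞,0). -/
/-- The derivative of `u ↦ log (exp (a * u) + exp (b * u))`; with `a = log x` and `b = log y` it is
the logarithm of the diagonal Gini mean `G(u,u;x,y)`. -/
noncomputable def giniDensity (a b u : ℝ) : ℝ :=
  (Real.exp (a * u) * a + Real.exp (b * u) * b) / (Real.exp (a * u) + Real.exp (b * u))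

lemma hasDerivAt_exp_const_mul (a u : ℝ) :
    HasDerivAt (fun u : ℝ => Real.exp (a * u)) (Real.exp (a * u) * a) u := by
  simpa using ((hasDerivAt_id u).const_mul a).exp

lemma hasDerivAt_giniDensity (a b u : ℝ) :
    HasDerivAt (giniDensity a b) ((a - b) ^ 2 / (2 + 2 * Real.cosh ((a - b) * u))) u := by
  have ha := hasDerivAt_exp_const_mul a u
  have hb := hasDerivAt_exp_const_mul b u
  have hP := Real.exp_pos (a * u)
  have hQ := Real.exp_pos (b * u)
  refine (((ha.mul_const a).add (hb.mul_const b)).div (ha.add hb)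
    (add_pos hP hQ).ne').congr_deriv ?_
  have h1 : (a - b) * u = a * u - b * u := by ring
  have h2 : -(a * u - b * u) = b * u - a * u := by ring
  rw [Real.cosh_eq, h1, h2, Real.exp_sub, Real.exp_sub]
  simp only [Pi.add_apply]
  generalize Real.exp (a * u) = P at *
  generalize Real.exp (b * u) = Q at *
  have h3 : 2 + 2 * ((P / Q + Q / P) / 2) = (P + Q) ^ 2 / (P * Q) := by
    field_simp
    ring
  rw [h3]
  field_simp
  ring

lemma continuous_giniDensity (a b : ℝ) : Continuous (giniDensity a b) :=
  continuous_iff_continuousAt.2 fun u => (hasDerivAt_giniDensity a b u).continuousAt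

lemma convexOn_giniDensity (a b : ℝ) : ConvexOn ℝ (Set.Iio 0) (giniDensity a b) := by
  have hd : deriv (giniDensity a b) = fun u => (a - b) ^ 2 / (2 + 2 * Real.cosh ((a - b) * u)) :=
    funext fun u => (hasDerivAt_giniDensity a b u).deriv
  refine MonotoneOn.convexOn_of_deriv (convex_Iio 0) (continuous_giniDensity a b).continuousOn
    (fun u _ => (hasDerivAt_giniDensity a b u).differentiableAt.differentiableWithinAt) ?_
  rw [hd, interior_Iio]
  intro u hu v hv huv
  have hv' : v < 0 := hv
  have hu' : u < 0 := hu
  have hc : Real.cosh ((a - b) * v) ≤ Real.cosh ((a - b) * u) := by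
    rw [Real.cosh_le_cosh, abs_mul, abs_mul, abs_of_neg hu', abs_of_neg hv']
    gcongr
  have := Real.cosh_pos ((a - b) * v)
  dsimp only
  gcongr

/-- The logarithm of the Gini mean is the average of `giniDensity` over the segment from `r` to
`s`. -/
lemma log_gini_eq_integral {x y : ℝ} (hx : 0 < x) (hy : 0 < y) (r s : ℝ) :
    Real.log (gini r s x y) =
      ∫ t in (0 : ℝ)..1, giniDensity (Real.log x) (Real.log y) (r + t * (s - r)) := by
  unfold gini
  split_ifs with h
  · subst h
    simp [giniDensity, Real.rpow_def_of_pos hx, Real.rpow_def_of_pos hy]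
  · have hsr : s - r ≠ 0 := sub_ne_zero.2 (Ne.symm h)
    -- `log (x ^ u + y ^ u) / (s - r)` at `u = r + t * (s - r)` is an antiderivative in `t`.
    have hF : ∀ u, HasDerivAt
        (fun u => Real.log (Real.exp (Real.log x * u) + Real.exp (Real.log y * u)))
        (giniDensity (Real.log x) (Real.log y) u) u := fun u =>
      ((hasDerivAt_exp_const_mul _ u).add (hasDerivAt_exp_const_mul _ u)).log
        (add_pos (Real.exp_pos _) (Real.exp_pos _)).ne'
    have hG : ∀ t ∈ Set.uIcc (0 : ℝ) 1, HasDerivAt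
        (fun t => Real.log (Real.exp (Real.log x * (r + t * (s - r))) +
          Real.exp (Real.log y * (r + t * (s - r)))) / (s - r))
        (giniDensity (Real.log x) (Real.log y) (r + t * (s - r))) t := fun t _ => by
      have hl : HasDerivAt (fun t : ℝ => r + t * (s - r)) (s - r) t := by
        simpa using ((hasDerivAt_id t).mul_const (s - r)).const_add r
      refine (((hF _).comp t hl).div_const (s - r)).congr_deriv ?_
      field_simp
    have hc := (continuous_giniDensity (Real.log x) (Real.log y)).comp
      (by fun_prop : Continuous fun t : ℝ => r + t * (s - r))
    rw [intervalIntegral.integral_eq_sub_of_hasDerivAt hG (hc.intervalIntegrable 0 1),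
      Real.log_rpow (by positivity), Real.log_div (by positivity) (by positivity)]
    simp only [Real.rpow_def_of_pos hx, Real.rpow_def_of_pos hy, one_mul, zero_mul, add_zero,
      add_sub_cancel]
    ring

theorem gini_log_convexOn_neg (x y : ℝ) (hx : 0 < x) (hy : 0 < y) :
    ConvexOn ℝ (Set.Iio (0 : ℝ) ×ˢ Set.Iio (0 : ℝ))
      (fun p : ℝ × ℝ => Real.log (gini p.1 p.2 x y)) := by
  refine ⟨(convex_Iio 0).prod (convex_Iio 0), ?_⟩
  rintro ⟨r, s⟩ ⟨hr, hs⟩ ⟨r', s'⟩ ⟨hr', hs'⟩ α β hα hβ hαβ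
  simp only [log_gini_eq_integral hx hy, Prod.smul_mk, Prod.mk_add_mk, smul_eq_mul]
  have hc : ∀ r s : ℝ, Continuous fun t : ℝ =>
      giniDensity (Real.log x) (Real.log y) (r + t * (s - r)) := fun r s =>
    (continuous_giniDensity _ _).comp (by fun_prop)
  rw [← intervalIntegral.integral_const_mul, ← intervalIntegral.integral_const_mul,
    ← intervalIntegral.integral_add (((hc r s).const_mul α).intervalIntegrable 0 1)
      (((hc r' s').const_mul β).intervalIntegrable 0 1)]
  refine intervalIntegral.integral_mono_on zero_le_one ((hc _ _).intervalIntegrable 0 1)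
    ((((hc r s).const_mul α).add ((hc r' s').const_mul β)).intervalIntegrable 0 1) ?_
  intro t ht
  have hneg : ∀ r s : ℝ, r ∈ Set.Iio (0 : ℝ) → s ∈ Set.Iio (0 : ℝ) →
      r + t * (s - r) ∈ Set.Iio (0 : ℝ) := fun r s hr hs =>
    (convex_Iio (0 : ℝ)).add_smul_sub_mem hr hs ht
  have key := (convexOn_giniDensity (Real.log x) (Real.log y)).2
    (hneg r s hr hs) (hneg r' s' hr' hs') hα hβ hαβ
  simp only [smul_eq_mul] at key
  have hlin : α * r + β * r' + t * (α * s + β * s' - (α * r + β * r')) =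
      α * (r + t * (s - r)) + β * (r' + t * (s' - r')) := by ring
  rw [hlin]
  exact key
end

section
/- For all positive real numbers x, y, the function g(u) = (x^u ln x + y^u ln y)/(x^u + y^u) is twice differentiable on ℝ with g''(u) = - x^u y^u (x^u - y^u)(ln x - ln y)^3 / (x^u + y^u)^3; consequently g''(u) ≥ 0 for u ≤ 0 and g''(u) ≤ 0 for u ≥ 0. -/
/-!
Write `A = x ^ u`, `B = y ^ u`, `a = log x`, `b = log y`, so that `A' = A a` and `B' = B b`.
The quotient rule gives `g' = A B (a - b)² / (A + B)²`, and once more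
`g'' = -A B (A - B) (a - b)³ / (A + B)³`.
Since `t ↦ t ^ u` is monotone on the positive reals for `u ≥ 0` and antitone for `u ≤ 0`, while `log` is monotone,
the product `(A - B) (a - b)` has the sign of `u` (or vanishes). The remaining factors
`A B (a - b)² / (A + B)³` are nonnegative.
-/

/-- The first derivative of `u ↦ (x ^ u log x + y ^ u log y) / (x ^ u + y ^ u)`. -/
lemma hasDerivAt_gini_integrand {x y : ℝ} (hx : 0 < x) (hy : 0 < y) (u : ℝ) :
    HasDerivAt (fun u : ℝ => (x ^ u * Real.log x + y ^ u * Real.log y) / (x ^ u + y ^ u))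
      (x ^ u * y ^ u * (Real.log x - Real.log y) ^ 2 / (x ^ u + y ^ u) ^ 2) u := by
  have hA := (Real.hasStrictDerivAt_const_rpow hx u).hasDerivAt
  have hB := (Real.hasStrictDerivAt_const_rpow hy u).hasDerivAt
  have hS : x ^ u + y ^ u ≠ 0 := by positivity
  refine (((hA.mul_const (Real.log x)).add (hB.mul_const (Real.log y))).div
    (hA.add hB) hS).congr_deriv ?_
  simp only [Pi.add_apply]
  congr 1
  ring

lemma hasDerivAt_deriv_gini_integrand {x y : ℝ} (hx : 0 < x) (hy : 0 < y) (u : ℝ) :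
    HasDerivAt
      (fun u : ℝ => x ^ u * y ^ u * (Real.log x - Real.log y) ^ 2 / (x ^ u + y ^ u) ^ 2)
      (-(x ^ u * y ^ u * (x ^ u - y ^ u) * (Real.log x - Real.log y) ^ 3) /
        (x ^ u + y ^ u) ^ 3) u := by
  have hA := (Real.hasStrictDerivAt_const_rpow hx u).hasDerivAt
  have hB := (Real.hasStrictDerivAt_const_rpow hy u).hasDerivAt
  have hS : x ^ u + y ^ u ≠ 0 := by positivity
  refine (((hA.mul hB).mul_const ((Real.log x - Real.log y) ^ 2)).div
    ((hA.add hB).pow 2) (pow_ne_zero 2 hS)).congr_deriv ?_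
  simp only [Pi.add_apply, Pi.mul_apply, Pi.pow_apply]
  field_simp
  ring

lemma rpow_sub_mul_log_sub_nonneg {x y u : ℝ} (hx : 0 < x) (hy : 0 < y) (hu : 0 ≤ u) :
    0 ≤ (x ^ u - y ^ u) * (Real.log x - Real.log y) := by
  rcases le_total x y with h | h
  · exact mul_nonneg_of_nonpos_of_nonpos
      (sub_nonpos.2 (Real.rpow_le_rpow hx.le h hu)) (sub_nonpos.2 (Real.log_le_log hx h))
  · exact mul_nonneg
      (sub_nonneg.2 (Real.rpow_le_rpow hy.le h hu)) (sub_nonneg.2 (Real.log_le_log hy h))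

lemma rpow_sub_mul_log_sub_nonpos {x y u : ℝ} (hx : 0 < x) (hy : 0 < y) (hu : u ≤ 0) :
    (x ^ u - y ^ u) * (Real.log x - Real.log y) ≤ 0 := by
  rcases le_total x y with h | h
  · exact mul_nonpos_of_nonneg_of_nonpos
      (sub_nonneg.2 (Real.rpow_le_rpow_of_nonpos hx h hu)) (sub_nonpos.2 (Real.log_le_log hx h))
  · exact mul_nonpos_of_nonpos_of_nonneg
      (sub_nonpos.2 (Real.rpow_le_rpow_of_nonpos hy h hu)) (sub_nonneg.2 (Real.log_le_log hy h))

theorem deriv2_gini_integrand (x y : ℝ) (hx : 0 < x) (hy : 0 < y) :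
    (∀ u : ℝ,
      HasDerivAt
        (deriv (fun u : ℝ => (x ^ u * Real.log x + y ^ u * Real.log y) / (x ^ u + y ^ u)))
        (-(x ^ u * y ^ u * (x ^ u - y ^ u) * (Real.log x - Real.log y) ^ 3) /
          (x ^ u + y ^ u) ^ 3) u) ∧
    (∀ u : ℝ, u ≤ 0 →
      0 ≤ -(x ^ u * y ^ u * (x ^ u - y ^ u) * (Real.log x - Real.log y) ^ 3) /
        (x ^ u + y ^ u) ^ 3) ∧
    (∀ u : ℝ, 0 ≤ u →
      -(x ^ u * y ^ u * (x ^ u - y ^ u) * (Real.log x - Real.log y) ^ 3) /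
        (x ^ u + y ^ u) ^ 3 ≤ 0) := by
  -- Isolate the only factor of the second derivative whose sign depends on `u`.
  have key : ∀ u : ℝ,
      -(x ^ u * y ^ u * (x ^ u - y ^ u) * (Real.log x - Real.log y) ^ 3) / (x ^ u + y ^ u) ^ 3 =
        -(x ^ u * y ^ u * (Real.log x - Real.log y) ^ 2 / (x ^ u + y ^ u) ^ 3 *
          ((x ^ u - y ^ u) * (Real.log x - Real.log y))) := fun u => by ring
  have hpos : ∀ u : ℝ,
      0 ≤ x ^ u * y ^ u * (Real.log x - Real.log y) ^ 2 / (x ^ u + y ^ u) ^ 3 :=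
    fun u => by positivity
  refine ⟨fun u => ?_, fun u hu => ?_, fun u hu => ?_⟩
  · rw [funext fun v => (hasDerivAt_gini_integrand hx hy v).deriv]
    exact hasDerivAt_deriv_gini_integrand hx hy u
  · rw [key, neg_nonneg]
    exact mul_nonpos_of_nonneg_of_nonpos (hpos u) (rpow_sub_mul_log_sub_nonpos hx hy hu)
  · rw [key, neg_nonpos]
    exact mul_nonneg (hpos u) (rpow_sub_mul_log_sub_nonneg hx hy hu)
end

section
/- For all positive real numbers x, y, the function g(u) = (x^u ln x + y^u ln y)/(x^u + y^u) is convex on (-∞,0] and concave on [0,∞). -/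
/-!
Put `m = (log x + log y) / 2` and `d = (log x - log y) / 2`. Since `x ^ u = exp (m u) exp (d u)` and
`y ^ u = exp (m u) exp (-d u)`, the quotient equals `m + d * tanh (d u)`. Its derivative
`d ^ 2 / cosh (d u) ^ 2` depends only on `|d u|` and decreases in it, so it is increasing on
`(-∞, 0]` and decreasing on `[0, ∞)`.
-/

theorem gini_integrand_eq_tanh {x y : ℝ} (hx : 0 < x) (hy : 0 < y) (u : ℝ) :
    (x ^ u * Real.log x + y ^ u * Real.log y) / (x ^ u + y ^ u) =
      (Real.log x + Real.log y) / 2 +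
        (Real.log x - Real.log y) / 2 * Real.tanh ((Real.log x - Real.log y) / 2 * u) := by
  rw [Real.rpow_def_of_pos hx, Real.rpow_def_of_pos hy]
  generalize Real.log x = a
  generalize Real.log y = b
  have ha : a * u = (a + b) / 2 * u + (a - b) / 2 * u := by ring
  have hb : b * u = (a + b) / 2 * u + -((a - b) / 2 * u) := by ring
  rw [ha, hb, Real.exp_add, Real.exp_add, Real.tanh_eq_sinh_div_cosh, Real.sinh_eq, Real.cosh_eq]
  have h1 := Real.exp_pos ((a + b) / 2 * u)
  have h2 := Real.exp_pos ((a - b) / 2 * u)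
  have h3 := Real.exp_pos (-((a - b) / 2 * u))
  generalize Real.exp ((a + b) / 2 * u) = p at *
  generalize Real.exp ((a - b) / 2 * u) = q at *
  generalize Real.exp (-((a - b) / 2 * u)) = r at *
  field_simp
  ring

theorem hasDerivAt_add_mul_tanh (m d u : ℝ) :
    HasDerivAt (fun u : ℝ => m + d * Real.tanh (d * u)) (d ^ 2 / Real.cosh (d * u) ^ 2) u := by
  have hc : Real.cosh (d * u) ≠ 0 := (Real.cosh_pos _).ne'
  have hl : HasDerivAt (fun u : ℝ => d * u) d u := by
    simpa using (hasDerivAt_id u).const_mul d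
  have h := ((hl.sinh.fun_div hl.cosh hc).const_mul d).const_add m
  simp only [Real.tanh_eq_sinh_div_cosh]
  refine h.congr_deriv ?_
  have hsq := Real.cosh_sq (d * u)
  field_simp
  linear_combination d ^ 2 * hsq

theorem sq_div_cosh_sq_le {d u v : ℝ} (h : |u| ≤ |v|) :
    d ^ 2 / Real.cosh (d * v) ^ 2 ≤ d ^ 2 / Real.cosh (d * u) ^ 2 := by
  have hc : Real.cosh (d * u) ≤ Real.cosh (d * v) := by
    rw [Real.cosh_le_cosh, abs_mul, abs_mul]
    gcongr
  have := Real.cosh_pos (d * u)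
  gcongr

theorem gini_integrand_convex_concave (x y : ℝ) (hx : 0 < x) (hy : 0 < y) :
    ConvexOn ℝ (Set.Iic (0 : ℝ))
      (fun u : ℝ => (x ^ u * Real.log x + y ^ u * Real.log y) / (x ^ u + y ^ u)) ∧
    ConcaveOn ℝ (Set.Ici (0 : ℝ))
      (fun u : ℝ => (x ^ u * Real.log x + y ^ u * Real.log y) / (x ^ u + y ^ u)) := by
  simp only [gini_integrand_eq_tanh hx hy]
  generalize (Real.log x + Real.log y) / 2 = m
  generalize (Real.log x - Real.log y) / 2 = d
  have hdiff : Differentiable ℝ (fun u : ℝ => m + d * Real.tanh (d * u)) :=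
    fun u => (hasDerivAt_add_mul_tanh m d u).differentiableAt
  have hderiv (u : ℝ) : deriv (fun u : ℝ => m + d * Real.tanh (d * u)) u =
      d ^ 2 / Real.cosh (d * u) ^ 2 := (hasDerivAt_add_mul_tanh m d u).deriv
  constructor
  · refine MonotoneOn.convexOn_of_deriv (convex_Iic 0) hdiff.continuous.continuousOn
      hdiff.differentiableOn fun u _ v hv huv => ?_
    rw [interior_Iic, Set.mem_Iio] at hv
    rw [hderiv, hderiv]
    exact sq_div_cosh_sq_le (abs_le_abs_of_nonpos hv.le huv)
  · refine AntitoneOn.concaveOn_of_deriv (convex_Ici 0) hdiff.continuous.continuousOn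
      hdiff.differentiableOn fun u hu v _ huv => ?_
    rw [interior_Ici, Set.mem_Ioi] at hu
    rw [hderiv, hderiv]
    exact sq_div_cosh_sq_le (abs_le_abs_of_nonneg hu.le huv)
end

section
/- For all positive real numbers x and y and all real numbers r, s, the function t ↦ ln H_{r,s;x,y}(t) is convex on the interval (-∞, -(r+s)/2); that is, H_{r,s;x,y} is logarithmically convex on (-∞, -(r+s)/2). -/
/-- `H_{r,s;x,y}(t) = G(r+t, s+t; x, y)`. -/
noncomputable def giniH (r s x y t : ℝ) : ℝ := gini (r + t) (s + t) x y

theorem convexOn_of_hasDerivAt_div_cosh {g : ℝ → ℝ} {K D c p : ℝ} (hK : 0 ≤ K) (hD : 0 ≤ D)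
    (hg : ∀ t, HasDerivAt g (K / (Real.cosh (c * (p + 2 * t)) + D)) t) :
    ConvexOn ℝ (Set.Iio (-p / 2)) g := by
  apply MonotoneOn.convexOn_of_deriv (convex_Iio _)
  · exact fun t _ => (hg t).continuousAt.continuousWithinAt
  · exact fun t _ => (hg t).differentiableAt.differentiableWithinAt
  · rw [interior_Iio]
    intro t ht u hu htu
    rw [Set.mem_Iio] at ht hu
    rw [(hg t).deriv, (hg u).deriv]
    have hpos := Real.cosh_pos (c * (p + 2 * u))
    have hle : Real.cosh (c * (p + 2 * u)) ≤ Real.cosh (c * (p + 2 * t)) := by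
      rw [Real.cosh_le_cosh, abs_mul, abs_mul]
      apply mul_le_mul_of_nonneg_left _ (abs_nonneg c)
      rw [abs_of_nonpos (by linarith), abs_of_nonpos (by linarith)]
      linarith
    gcongr

theorem rpow_eq_exp_mul_exp {x y : ℝ} (hx : 0 < x) (u : ℝ) :
    x ^ u = Real.exp ((Real.log x + Real.log y) / 2 * u)
      * Real.exp ((Real.log x - Real.log y) / 2 * u) := by
  rw [Real.rpow_def_of_pos hx, ← Real.exp_add]
  ring_nf

theorem rpow_eq_exp_mul_exp_neg {x y : ℝ} (hy : 0 < y) (u : ℝ) :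
    y ^ u = Real.exp ((Real.log x + Real.log y) / 2 * u)
      * Real.exp (-((Real.log x - Real.log y) / 2 * u)) := by
  rw [Real.rpow_def_of_pos hy, ← Real.exp_add]
  ring_nf

theorem rpow_add_rpow_eq_exp_mul_cosh {x y : ℝ} (hx : 0 < x) (hy : 0 < y) (u : ℝ) :
    x ^ u + y ^ u = Real.exp ((Real.log x + Real.log y) / 2 * u)
      * (2 * Real.cosh ((Real.log x - Real.log y) / 2 * u)) := by
  rw [rpow_eq_exp_mul_exp (y := y) hx, rpow_eq_exp_mul_exp_neg (x := x) hy, Real.cosh_eq]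
  ring

theorem log_gini_self {x y : ℝ} (hx : 0 < x) (hy : 0 < y) (u : ℝ) :
    Real.log (gini u u x y) = (Real.log x + Real.log y) / 2
      + (Real.log x - Real.log y) / 2 * (Real.sinh ((Real.log x - Real.log y) / 2 * u)
        / Real.cosh ((Real.log x - Real.log y) / 2 * u)) := by
  rw [gini, if_pos rfl, Real.log_exp, rpow_add_rpow_eq_exp_mul_cosh hx hy,
    rpow_eq_exp_mul_exp (y := y) hx, rpow_eq_exp_mul_exp_neg (x := x) hy]
  have h1 := Real.exp_pos ((Real.log x + Real.log y) / 2 * u)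
  have h2 := Real.cosh_pos ((Real.log x - Real.log y) / 2 * u)
  rw [← Real.cosh_add_sinh ((Real.log x - Real.log y) / 2 * u),
    ← Real.cosh_sub_sinh ((Real.log x - Real.log y) / 2 * u)]
  generalize Real.exp ((Real.log x + Real.log y) / 2 * u) = E at *
  generalize Real.cosh ((Real.log x - Real.log y) / 2 * u) = C at *
  generalize Real.sinh ((Real.log x - Real.log y) / 2 * u) = S at *
  field_simp
  ring

theorem log_gini_of_ne {x y : ℝ} (hx : 0 < x) (hy : 0 < y) {u v : ℝ} (huv : u ≠ v) :
    Real.log (gini u v x y) = (Real.log x + Real.log y) / 2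
      + (Real.log (Real.cosh ((Real.log x - Real.log y) / 2 * v))
        - Real.log (Real.cosh ((Real.log x - Real.log y) / 2 * u))) / (v - u) := by
  have hlog : ∀ w : ℝ, Real.log (x ^ w + y ^ w) = (Real.log x + Real.log y) / 2 * w
      + (Real.log 2 + Real.log (Real.cosh ((Real.log x - Real.log y) / 2 * w))) := fun w => by
    have h := Real.cosh_pos ((Real.log x - Real.log y) / 2 * w)
    rw [rpow_add_rpow_eq_exp_mul_cosh hx hy, Real.log_mul (Real.exp_pos _).ne' (by positivity),
      Real.log_mul two_ne_zero h.ne', Real.log_exp]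
  have hpos : ∀ w : ℝ, 0 < x ^ w + y ^ w := fun w => by positivity
  have hne : v - u ≠ 0 := sub_ne_zero.2 huv.symm
  rw [gini, if_neg huv, Real.log_rpow (div_pos (hpos v) (hpos u)),
    Real.log_div (hpos v).ne' (hpos u).ne', hlog, hlog]
  field_simp
  ring

theorem hasDerivAt_log_cosh (c a t : ℝ) :
    HasDerivAt (fun t => Real.log (Real.cosh (c * (a + t))))
      (c * (Real.sinh (c * (a + t)) / Real.cosh (c * (a + t)))) t := by
  have h := ((((hasDerivAt_id t).const_add a).const_mul c).cosh).log (Real.cosh_pos _).ne'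
  refine h.congr_deriv ?_
  simp only [id]
  ring

theorem hasDerivAt_sinh_div_cosh (c a t : ℝ) :
    HasDerivAt (fun t => Real.sinh (c * (a + t)) / Real.cosh (c * (a + t)))
      (c / Real.cosh (c * (a + t)) ^ 2) t := by
  have h := ((hasDerivAt_id t).const_add a).const_mul c
  refine (h.sinh.div h.cosh (Real.cosh_pos _).ne').congr_deriv ?_
  simp only [id]
  congr 1
  linear_combination c * Real.cosh_sq_sub_sinh_sq (c * (a + t))

theorem mul_sinh_mul_div_nonneg (c d : ℝ) : 0 ≤ c * Real.sinh (c * d) / d := by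
  have h : 0 ≤ c * d * Real.sinh (c * d) := by
    rcases le_total 0 (c * d) with h | h
    · exact mul_nonneg h (Real.sinh_nonneg_iff.2 h)
    · exact mul_nonneg_of_nonpos_of_nonpos h (Real.sinh_nonpos_iff.2 h)
  rcases eq_or_ne d 0 with rfl | hd
  · simp
  · have : c * Real.sinh (c * d) / d = c * d * Real.sinh (c * d) / d ^ 2 := by
      field_simp
    rw [this]
    positivity

theorem giniH_log_convexOn (x y : ℝ) (hx : 0 < x) (hy : 0 < y) (r s : ℝ) :
    ConvexOn ℝ (Set.Iio (-(r + s) / 2)) (fun t : ℝ => Real.log (giniH r s x y t)) := by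
  rcases eq_or_ne r s with rfl | hrs
  · simp only [giniH, log_gini_self hx hy]
    set c := (Real.log x - Real.log y) / 2
    refine convexOn_of_hasDerivAt_div_cosh (K := 2 * c ^ 2) (D := 1) (c := c) (by positivity)
      zero_le_one fun t => ?_
    refine (((hasDerivAt_sinh_div_cosh c r t).const_mul c).const_add _).congr_deriv ?_
    have hC := Real.cosh_pos (c * (r + t))
    rw [show c * (r + r + 2 * t) = 2 * (c * (r + t)) by ring, Real.cosh_two_mul, Real.sinh_sq,
      show Real.cosh (c * (r + t)) ^ 2 + (Real.cosh (c * (r + t)) ^ 2 - 1) + 1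
        = 2 * Real.cosh (c * (r + t)) ^ 2 by ring]
    field_simp
  · have hne : ∀ t, r + t ≠ s + t := fun t h => hrs (add_right_cancel h)
    simp only [giniH, fun t => log_gini_of_ne hx hy (hne t), add_sub_add_right_eq_sub]
    set c := (Real.log x - Real.log y) / 2
    refine convexOn_of_hasDerivAt_div_cosh (K := 2 * (c * Real.sinh (c * (s - r)) / (s - r)))
      (D := Real.cosh (c * (s - r))) (c := c)
      (mul_nonneg zero_le_two (mul_sinh_mul_div_nonneg _ _)) (Real.cosh_pos _).le fun t => ?_
    refine ((((hasDerivAt_log_cosh c s t).sub (hasDerivAt_log_cosh c r t)).div_const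
      (s - r)).const_add _).congr_deriv ?_
    have hd : s - r ≠ 0 := sub_ne_zero.2 hrs.symm
    have hCs := Real.cosh_pos (c * (s + t))
    have hCr := Real.cosh_pos (c * (r + t))
    -- `cosh (A + B) + cosh (A - B) = 2 cosh A cosh B` with `A = c (s + t)`, `B = c (r + t)`.
    have hden : Real.cosh (c * (r + s + 2 * t)) + Real.cosh (c * (s - r))
        = 2 * (Real.cosh (c * (s + t)) * Real.cosh (c * (r + t))) := by
      rw [show c * (r + s + 2 * t) = c * (s + t) + c * (r + t) by ring,
        show c * (s - r) = c * (s + t) - c * (r + t) by ring, Real.cosh_add, Real.cosh_sub]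
      ring
    rw [hden, show c * (s - r) = c * (s + t) - c * (r + t) by ring, Real.sinh_sub]
    field_simp
end

section
/- For all positive real numbers x and y, the function f(u) = x^u y^u (ln x - ln y)^2 / (x^u + y^u)^2 is even on ℝ (f(u) = f(-u) for all u), increasing on (-∞, 0), and decreasing on (0, ∞). -/
/-!
With `L = log x - log y`, dividing numerator and denominator by `x ^ u * y ^ u` gives
`f u = L ^ 2 / (2 * cosh (u * L / 2)) ^ 2` (`f_eq_cosh`). Since `cosh` is even and increasing
in the absolute value of its argument, `f` is antitone in `|u|` (`f_le_of_abs_le`), and all three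
claims follow from this.
-/

theorem f_eq_cosh {x y : ℝ} (hx : 0 < x) (hy : 0 < y) (u : ℝ) :
    x ^ u * y ^ u * (Real.log x - Real.log y) ^ 2 / (x ^ u + y ^ u) ^ 2 =
      (Real.log x - Real.log y) ^ 2 /
        (2 * Real.cosh (u * (Real.log x - Real.log y) / 2)) ^ 2 := by
  -- `a` and `b` are the square roots of `x ^ u` and `y ^ u`; then `2 * cosh = a / b + b / a`.
  set a := Real.exp (u * Real.log x / 2) with ha
  set b := Real.exp (u * Real.log y / 2) with hb
  have ha0 : 0 < a := Real.exp_pos _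
  have hb0 : 0 < b := Real.exp_pos _
  have hxu : x ^ u = a ^ 2 := by
    rw [Real.rpow_def_of_pos hx, ha, ← Real.exp_nat_mul]
    congr 1
    push_cast
    ring
  have hyu : y ^ u = b ^ 2 := by
    rw [Real.rpow_def_of_pos hy, hb, ← Real.exp_nat_mul]
    congr 1
    push_cast
    ring
  have hc : 2 * Real.cosh (u * (Real.log x - Real.log y) / 2) = a / b + b / a := by
    rw [Real.cosh_eq, ha, hb, ← Real.exp_sub, ← Real.exp_sub, mul_div_cancel₀ _ two_ne_zero]
    congr 2 <;> ring
  have hab : a / b + b / a = (a ^ 2 + b ^ 2) / (a * b) := by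
    field_simp
  rw [hxu, hyu, hc, hab]
  field_simp

theorem f_le_of_abs_le {x y : ℝ} (hx : 0 < x) (hy : 0 < y) {u v : ℝ} (h : |u| ≤ |v|) :
    x ^ v * y ^ v * (Real.log x - Real.log y) ^ 2 / (x ^ v + y ^ v) ^ 2 ≤
      x ^ u * y ^ u * (Real.log x - Real.log y) ^ 2 / (x ^ u + y ^ u) ^ 2 := by
  rw [f_eq_cosh hx hy, f_eq_cosh hx hy]
  have hcosh : Real.cosh (u * (Real.log x - Real.log y) / 2) ≤
      Real.cosh (v * (Real.log x - Real.log y) / 2) := by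
    rw [Real.cosh_le_cosh, abs_div, abs_div, abs_mul, abs_mul]
    gcongr
  have hpos := Real.cosh_pos (u * (Real.log x - Real.log y) / 2)
  gcongr

theorem even_monotone_antitone_f (x y : ℝ) (hx : 0 < x) (hy : 0 < y) :
    (∀ u : ℝ,
      x ^ u * y ^ u * (Real.log x - Real.log y) ^ 2 / (x ^ u + y ^ u) ^ 2 =
        x ^ (-u) * y ^ (-u) * (Real.log x - Real.log y) ^ 2 / (x ^ (-u) + y ^ (-u)) ^ 2) ∧
    MonotoneOn
      (fun u : ℝ => x ^ u * y ^ u * (Real.log x - Real.log y) ^ 2 / (x ^ u + y ^ u) ^ 2)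
      (Set.Iio (0 : ℝ)) ∧
    AntitoneOn
      (fun u : ℝ => x ^ u * y ^ u * (Real.log x - Real.log y) ^ 2 / (x ^ u + y ^ u) ^ 2)
      (Set.Ioi (0 : ℝ)) := by
  refine ⟨fun u => le_antisymm ?_ ?_, fun u hu v hv huv => ?_, fun u hu v hv huv => ?_⟩
  · exact f_le_of_abs_le hx hy (abs_neg u).le
  · exact f_le_of_abs_le hx hy (abs_neg u).ge
  · refine f_le_of_abs_le hx hy ?_
    rw [abs_of_neg hv, abs_of_neg hu]
    exact neg_le_neg huv
  · refine f_le_of_abs_le hx hy ?_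
    rwa [abs_of_pos hu, abs_of_pos hv]
end

section
/- Let f be a twice differentiable and convex real function on an interval I, and define φ(r,s) = (1/(s - r)) ∫_r^s f(t) dt for r ≠ s in I and φ(r,r) = f(r). Then φ is convex as a function of the pair (r,s) on I × I. -/
/-!
Substituting `t = r + (s - r) * u` turns the mean into `∫ u in 0..1, f (r + (s - r) * u)`, a formula
which also covers the diagonal `r = s`. For each fixed `u` the integrand is the convex function `f`
composed with a map linear in `(r, s)`, and integrating over `u` preserves convexity. The
differentiability of `f` serves only to make the integrands continuous, hence integrable.
-/

/-- The integral arithmetic mean of `f`. -/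
noncomputable def intMean (f : ℝ → ℝ) (r s : ℝ) : ℝ :=
  if r = s then f r else (1 / (s - r)) * ∫ t in r..s, f t

theorem intMean_eq_integral (f : ℝ → ℝ) (r s : ℝ) :
    intMean f r s = ∫ u in (0 : ℝ)..1, f (r + (s - r) * u) := by
  unfold intMean
  split_ifs with h
  · subst h; simp
  · have h' : s - r ≠ 0 := sub_ne_zero.mpr (Ne.symm h)
    rw [intervalIntegral.integral_comp_add_mul f h' r]
    simp

theorem lineMap_mem_of_convex {I : Set ℝ} (hI : Convex ℝ I) {r s u : ℝ} (hr : r ∈ I) (hs : s ∈ I)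
    (hu : u ∈ Set.Icc (0 : ℝ) 1) : r + (s - r) * u ∈ I := by
  have := hI hr hs (sub_nonneg.mpr hu.2) hu.1 (by ring)
  convert this using 1
  simp only [smul_eq_mul]; ring

theorem intervalIntegrable_comp_segment {I : Set ℝ} (hI : Convex ℝ I) {f : ℝ → ℝ}
    (hf : ContinuousOn f I) {r s : ℝ} (hr : r ∈ I) (hs : s ∈ I) :
    IntervalIntegrable (fun u => f (r + (s - r) * u)) MeasureTheory.volume 0 1 := by
  apply ContinuousOn.intervalIntegrable
  rw [Set.uIcc_of_le zero_le_one]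
  exact hf.comp (by fun_prop) fun u hu => lineMap_mem_of_convex hI hr hs hu

theorem intMean_convexOn (I : Set ℝ) (hI : Convex ℝ I) (f : ℝ → ℝ)
    (hf : DifferentiableOn ℝ f I) (hf' : DifferentiableOn ℝ (deriv f) I)
    (hconv : ConvexOn ℝ I f) :
    ConvexOn ℝ (I ×ˢ I) (fun p : ℝ × ℝ => intMean f p.1 p.2) := by
  refine ⟨hI.prod hI, ?_⟩
  rintro ⟨r, s⟩ ⟨hr, hs⟩ ⟨r', s'⟩ ⟨hr', hs'⟩ a b ha hb hab
  have hc := hf.continuousOn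
  have h1 := intervalIntegrable_comp_segment hI hc hr hs
  have h2 := intervalIntegrable_comp_segment hI hc hr' hs'
  have h3 := intervalIntegrable_comp_segment hI hc (hI hr hr' ha hb hab) (hI hs hs' ha hb hab)
  simp only [Prod.smul_mk, Prod.mk_add_mk, smul_eq_mul, intMean_eq_integral] at h3 ⊢
  rw [← intervalIntegral.integral_const_mul, ← intervalIntegral.integral_const_mul,
    ← intervalIntegral.integral_add (h1.const_mul a) (h2.const_mul b)]
  refine intervalIntegral.integral_mono_on zero_le_one h3
    ((h1.const_mul a).add (h2.const_mul b)) fun u hu => ?_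
  have hlin : a * r + b * r' + (a * s + b * s' - (a * r + b * r')) * u =
      a * (r + (s - r) * u) + b * (r' + (s' - r') * u) := by ring
  have := hconv.2 (lineMap_mem_of_convex hI hr hs hu) (lineMap_mem_of_convex hI hr' hs' hu)
    ha hb hab
  simp only [smul_eq_mul] at this
  rw [hlin]
  exact this
end

section
/- For all positive real numbers x and y and all real numbers r, s with r ≠ s, the function t ↦ ln H_{r,s;x,y}(t) is twice differentiable on ℝ with second derivative [ln H_{r,s;x,y}(t)]'' = (1/(s - r)) · [ x^{s+t} y^{s+t} (ln x - ln y)^2 / (x^{s+t} + y^{s+t})^2 - x^{r+t} y^{r+t} (ln x - ln y)^2 / (x^{r+t} + y^{r+t})^2 ]. -/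
/-- The mean of `log x` and `log y` with weights `x ^ a` and `y ^ a`. -/
noncomputable def weightedLogMean (x y a : ℝ) : ℝ :=
  (x ^ a * Real.log x + y ^ a * Real.log y) / (x ^ a + y ^ a)

theorem hasDerivAt_rpow_const_add {x : ℝ} (hx : 0 < x) (a t : ℝ) :
    HasDerivAt (fun t : ℝ => x ^ (a + t)) (x ^ (a + t) * Real.log x) t := by
  simpa [mul_comm] using ((hasDerivAt_id t).const_add a).const_rpow hx

theorem hasDerivAt_log_powerSum {x y : ℝ} (hx : 0 < x) (hy : 0 < y) (a t : ℝ) :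
    HasDerivAt (fun t : ℝ => Real.log (x ^ (a + t) + y ^ (a + t)))
      (weightedLogMean x y (a + t)) t :=
  ((hasDerivAt_rpow_const_add hx a t).add (hasDerivAt_rpow_const_add hy a t)).log
    (add_pos (Real.rpow_pos_of_pos hx _) (Real.rpow_pos_of_pos hy _)).ne'

theorem hasDerivAt_weightedLogMean {x y : ℝ} (hx : 0 < x) (hy : 0 < y) (a t : ℝ) :
    HasDerivAt (fun t : ℝ => weightedLogMean x y (a + t))
      (x ^ (a + t) * y ^ (a + t) * (Real.log x - Real.log y) ^ 2 /
        (x ^ (a + t) + y ^ (a + t)) ^ 2) t := by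
  have hX := hasDerivAt_rpow_const_add hx a t
  have hY := hasDerivAt_rpow_const_add hy a t
  have hne : x ^ (a + t) + y ^ (a + t) ≠ 0 :=
    (add_pos (Real.rpow_pos_of_pos hx _) (Real.rpow_pos_of_pos hy _)).ne'
  refine (((hX.mul_const (Real.log x)).add (hY.mul_const (Real.log y))).div
    (hX.add hY) hne).congr_deriv ?_
  simp only [Pi.add_apply]
  congr 1
  ring

theorem log_giniH_eq {x y r s : ℝ} (hx : 0 < x) (hy : 0 < y) (hrs : r ≠ s) (t : ℝ) :
    Real.log (giniH r s x y t) =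
      (1 / (s - r)) * (Real.log (x ^ (s + t) + y ^ (s + t)) -
        Real.log (x ^ (r + t) + y ^ (r + t))) := by
  have hpos (a : ℝ) : 0 < x ^ a + y ^ a :=
    add_pos (Real.rpow_pos_of_pos hx _) (Real.rpow_pos_of_pos hy _)
  have hne : r + t ≠ s + t := fun h => hrs (add_right_cancel h)
  rw [giniH, gini, if_neg hne, Real.log_rpow (div_pos (hpos _) (hpos _)),
    Real.log_div (hpos _).ne' (hpos _).ne', add_sub_add_right_eq_sub]

theorem log_giniH_second_deriv (x y : ℝ) (hx : 0 < x) (hy : 0 < y) (r s : ℝ) (hrs : r ≠ s) :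
    (∀ t : ℝ, DifferentiableAt ℝ (fun t : ℝ => Real.log (giniH r s x y t)) t) ∧
    (∀ t : ℝ,
      HasDerivAt (deriv (fun t : ℝ => Real.log (giniH r s x y t)))
        ((1 / (s - r)) *
          (x ^ (s + t) * y ^ (s + t) * (Real.log x - Real.log y) ^ 2 /
              (x ^ (s + t) + y ^ (s + t)) ^ 2 -
            x ^ (r + t) * y ^ (r + t) * (Real.log x - Real.log y) ^ 2 /
              (x ^ (r + t) + y ^ (r + t)) ^ 2)) t) := by
  have hfirst (t : ℝ) : HasDerivAt (fun t : ℝ => Real.log (giniH r s x y t))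
      ((1 / (s - r)) * (weightedLogMean x y (s + t) - weightedLogMean x y (r + t))) t := by
    simp only [log_giniH_eq hx hy hrs]
    exact ((hasDerivAt_log_powerSum hx hy s t).sub (hasDerivAt_log_powerSum hx hy r t)).const_mul _
  refine ⟨fun t => (hfirst t).differentiableAt, fun t => ?_⟩
  rw [funext fun t => (hfirst t).deriv]
  exact ((hasDerivAt_weightedLogMean hx hy s t).sub
    (hasDerivAt_weightedLogMean hx hy r t)).const_mul _
end
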